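/- For n ≥ 4, the polytope DP(n) (the convex hull of degree partitions of simple graphs on n vertices) has exactly n(n−3)/2 + 6 facets. -/

import Mathlib

open scoped Classical in
/-- The degree of vertex `v` in the simple graph `G` on `[n]`. -/
noncomputable def degC {n : ℕ} (G : SimpleGraph (Fin n)) (v : Fin n) : ℕ :=
  (Finset.univ.filter (fun w => G.Adj v w)).card

/-- `DP n`: the polytope of degree partitions, the convex hull in `ℝ^n` of the
weakly decreasing rearrangements of degree sequences of simple graphs on `[n]`. -/
noncomputable def DP (n : ℕ) : Set (Fin n → ℝ) :=
  convexHull ℝ {x : Fin n → ℝ | Antitone x ∧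
    ∃ (G : SimpleGraph (Fin n)) (σ : Equiv.Perm (Fin n)),
      ∀ i, x i = (degC G (σ i) : ℝ)}

open Filter Topology in
theorem eventually_forall_lt_add_smul {J E : Type*} [Finite J] [AddCommGroup E] [Module ℝ E]
    (a : J → E →ₗ[ℝ] ℝ) (b : J → ℝ) (p v : E)
    (h : ∀ j, a j p < b j ∨ (a j p ≤ b j ∧ a j v < 0)) :
    ∀ᶠ ε in 𝓝[>] (0 : ℝ), ∀ j, a j (p + ε • v) < b j := by
  refine eventually_all.2 fun j => ?_
  simp only [map_add, map_smul, smul_eq_mul]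
  rcases h j with h | ⟨h, h'⟩
  · have : Tendsto (fun ε : ℝ => a j p + ε * a j v) (𝓝[>] 0) (𝓝 (a j p + 0 * a j v)) :=
      (Continuous.tendsto (by fun_prop) 0).mono_left nhdsWithin_le_nhds
    exact this.eventually_lt_const (by simpa using h)
  · filter_upwards [self_mem_nhdsWithin] with ε hε
    have : ε * a j v < 0 := mul_neg_of_pos_of_neg hε h'
    linarith

theorem exists_pos_forall_lt_add_smul {J E : Type*} [Finite J] [AddCommGroup E] [Module ℝ E]
    (a : J → E →ₗ[ℝ] ℝ) (b : J → ℝ) (p v : E)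
    (h : ∀ j, a j p < b j ∨ (a j p ≤ b j ∧ a j v < 0)) :
    ∃ ε : ℝ, 0 < ε ∧ ∀ j, a j (p + ε • v) < b j := by
  obtain ⟨ε, h, hε⟩ :=
    ((eventually_forall_lt_add_smul a b p v h).and self_mem_nhdsWithin).exists
  exact ⟨ε, hε, h⟩

section Facets

variable {J E : Type*} [NormedAddCommGroup E] [NormedSpace ℝ E]
  (a : J → StrongDual ℝ E) (b : J → ℝ)

theorem convex_setOf_forall_le : Convex ℝ {x | ∀ j, a j x ≤ b j} := by
  simp only [Set.ofPred_forall]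
  exact convex_iInter fun j => convex_halfSpace_le (a j).isLinear (b j)

variable [Fintype J]

theorem vectorSpan_eq_ker_of_forall_lt {j : J} {z : E} (hz : a j z = b j)
    (hlt : ∀ i, i ≠ j → a i z < b i) :
    vectorSpan ℝ {x | (∀ i, a i x ≤ b i) ∧ a j x = b j} = LinearMap.ker (a j : E →ₗ[ℝ] ℝ) := by
  apply le_antisymm
  · refine Submodule.span_le.2 ?_
    rintro _ ⟨x, hx, y, hy, rfl⟩
    simp [hx.2, hy.2]
  · intro v hv
    have hv : a j v = 0 := hv
    obtain ⟨ε, hε, h⟩ := exists_pos_forall_lt_add_smul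
      (fun i : {i // i ≠ j} => (a i : E →ₗ[ℝ] ℝ)) (fun i => b i) z v fun i => .inl (hlt i i.2)
    have hle : ∀ {y : E}, a j y = b j → (∀ i, i ≠ j → a i y < b i) → ∀ i, a i y ≤ b i := by
      intro y hy h i
      rcases eq_or_ne i j with rfl | hi
      exacts [hy.le, (h i hi).le]
    have hzε : a j (z + ε • v) = b j := by simp [hz, hv]
    have := vsub_mem_vectorSpan ℝ (s := {x | (∀ i, a i x ≤ b i) ∧ a j x = b j})
      (p₁ := z + ε • v) (p₂ := z) ⟨hle hzε fun i hi => h ⟨i, hi⟩, hzε⟩ ⟨hle hz hlt, hz⟩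
    rw [vsub_eq_sub, add_sub_cancel_left] at this
    simpa [smul_smul, hε.ne'] using Submodule.smul_mem _ ε⁻¹ this

theorem exists_subset_of_isExposed [Nonempty J] {F : Set E} (hne : F.Nonempty)
    (hF : IsExposed ℝ {x | ∀ j, a j x ≤ b j} F) (hFP : F ≠ {x | ∀ j, a j x ≤ b j}) :
    ∃ j, ∀ x ∈ F, a j x = b j := by
  by_contra! h
  choose p hpF hp using h
  have hlt : ∀ j, a j (p j) < b j := fun j => lt_of_le_of_ne (hF.subset (hpF j) j) (hp j)
  have hcard : (0 : ℝ) < Fintype.card J := by exact_mod_cast Fintype.card_pos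
  set q : E := ∑ j, (Fintype.card J : ℝ)⁻¹ • p j with hq
  have hqF : q ∈ F := by
    refine (hF.convex (convex_setOf_forall_le a b)).sum_mem (fun _ _ => by positivity) ?_
      fun j _ => hpF j
    simp [hcard.ne']
  have hqlt : ∀ j, a j q < b j := by
    intro j
    have : ∑ i, (Fintype.card J : ℝ)⁻¹ * a j (p i) < ∑ _i : J, (Fintype.card J : ℝ)⁻¹ * b j := by
      refine Finset.sum_lt_sum (fun i _ => ?_) ⟨j, Finset.mem_univ j, ?_⟩
      · exact mul_le_mul_of_nonneg_left (hF.subset (hpF i) j) (by positivity)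
      · exact mul_lt_mul_of_pos_left (hlt j) (by positivity)
    simpa [hq, hcard.ne'] using this
  obtain ⟨c, rfl⟩ := hF hne
  have hc : ∀ v, c v ≤ 0 := by
    intro v
    obtain ⟨ε, hε, h⟩ := exists_pos_forall_lt_add_smul
      (fun i => (a i : E →ₗ[ℝ] ℝ)) b q v fun i => .inl (hqlt i)
    have := hqF.2 (q + ε • v) fun i => (h i).le
    simp only [map_add, map_smul, smul_eq_mul, add_le_iff_nonpos_right] at this
    exact nonpos_of_mul_nonpos_right this hε
  have hc0 : ∀ v, c v = 0 := fun v => le_antisymm (hc v) (by simpa using hc (-v))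
  exact hFP (by simp [hc0])

/-- An irredundant system of linear inequalities has as many facets as inequalities. -/
theorem ncard_facets_eq_card [FiniteDimensional ℝ E] [Nontrivial J]
    (hdim : 2 ≤ Module.finrank ℝ E)
    (hz : ∀ j, ∃ z, a j z = b j ∧ ∀ i, i ≠ j → a i z < b i) :
    {F : Set E | IsExposed ℝ {x | ∀ j, a j x ≤ b j} F ∧ F ≠ {x | ∀ j, a j x ≤ b j} ∧
      Module.finrank ℝ (vectorSpan ℝ F) = Module.finrank ℝ E - 1}.ncard = Fintype.card J := by
  choose z hz hlt using hz
  set P : Set E := {x | ∀ j, a j x ≤ b j} with hP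
  have hzP : ∀ j, z j ∈ P := by
    intro j i
    rcases eq_or_ne i j with rfl | hi
    exacts [(hz i).le, (hlt j i hi).le]
  have hker : ∀ j, Module.finrank ℝ (LinearMap.ker (a j : E →ₗ[ℝ] ℝ)) =
      Module.finrank ℝ E - 1 := by
    intro j
    obtain ⟨i, hi⟩ := exists_ne j
    have hne : (a j : E →ₗ[ℝ] ℝ) ≠ 0 := by
      intro h0
      have h1 := hz j
      have h2 := hlt i j hi.symm
      have h0' : ∀ x, a j x = 0 := fun x => LinearMap.congr_fun h0 x
      rw [h0'] at h1 h2
      linarith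
    have := Module.Dual.finrank_ker_add_one_of_ne_zero (f := (a j : E →ₗ[ℝ] ℝ)) hne
    omega
  have hset : {F : Set E | IsExposed ℝ P F ∧ F ≠ P ∧
      Module.finrank ℝ (vectorSpan ℝ F) = Module.finrank ℝ E - 1} =
      Set.range fun j => {x | (∀ i, a i x ≤ b i) ∧ a j x = b j} := by
    ext F
    constructor
    · rintro ⟨hF, hFP, hrank⟩
      have hne : F.Nonempty := by
        rw [Set.nonempty_iff_ne_empty]
        rintro rfl
        rw [vectorSpan_empty, finrank_bot] at hrank
        omega
      obtain ⟨j, hj⟩ := exists_subset_of_isExposed a b hne hF hFP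
      refine ⟨j, Set.Subset.antisymm ?_ fun x hx => ⟨hF.subset hx, hj x hx⟩⟩
      have hspan : vectorSpan ℝ F = LinearMap.ker (a j : E →ₗ[ℝ] ℝ) := by
        refine Submodule.eq_of_le_of_finrank_eq (Submodule.span_le.2 ?_) (hrank.trans (hker j).symm)
        rintro _ ⟨x, hx, y, hy, rfl⟩
        simp [hj x hx, hj y hy]
      obtain ⟨c, hc⟩ := hF hne
      have hspan' : vectorSpan ℝ F ≤ LinearMap.ker (c : E →ₗ[ℝ] ℝ) := by
        refine Submodule.span_le.2 ?_
        rintro _ ⟨x, hx, y, hy, rfl⟩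
        rw [hc] at hx hy
        simpa [sub_eq_zero] using le_antisymm (hy.2 x hx.1) (hx.2 y hy.1)
      rintro x ⟨hxP, hx⟩
      obtain ⟨q, hq⟩ := hne
      have hxq : x - q ∈ LinearMap.ker (c : E →ₗ[ℝ] ℝ) := by
        refine hspan' (hspan.symm ▸ ?_)
        simp [hx, hj q hq]
      have hcx : c x = c q := by simpa [sub_eq_zero] using hxq
      rw [hc] at hq ⊢
      exact ⟨hxP, fun y hy => hcx ▸ hq.2 y hy⟩
    · rintro ⟨j, rfl⟩
      refine ⟨fun _ => ⟨a j, ?_⟩, fun h => ?_, ?_⟩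
      · ext x
        refine and_congr_right fun hx => ⟨fun h y hy => h.symm ▸ hy j, fun h => ?_⟩
        exact le_antisymm (hx j) (hz j ▸ h (z j) (hzP j))
      · obtain ⟨i, hi⟩ := exists_ne j
        have : z i ∈ {x | (∀ i, a i x ≤ b i) ∧ a j x = b j} := by
          have hmem := hzP i
          rwa [← h] at hmem
        exact (hlt i j hi.symm).ne this.2
      · rw [vectorSpan_eq_ker_of_forall_lt a b (hz j) (hlt j), hker]
  have hinj : Function.Injective
      fun j => {x : E | (∀ i, a i x ≤ b i) ∧ a j x = b j} := by
    intro i j hij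
    by_contra hne
    have : z i ∈ {x : E | (∀ i, a i x ≤ b i) ∧ a j x = b j} := by
      have h : z i ∈ {x : E | (∀ i, a i x ≤ b i) ∧ a i x = b i} := ⟨hzP i, hz i⟩
      exact (Set.ext_iff.1 hij (z i)).1 h
    exact (hlt i j (Ne.symm hne)).ne this.2
  rw [hset, ← Set.image_univ, Set.ncard_image_of_injective _ hinj, Set.ncard_univ,
    Nat.card_eq_fintype_card]

end Facets

theorem convex_setOf_antitone (n : ℕ) : Convex ℝ {x : Fin n → ℝ | Antitone x} := by
  intro x hx y hy a b ha hb _ i j hij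
  have h1 := mul_le_mul_of_nonneg_left (hx hij) ha
  have h2 := mul_le_mul_of_nonneg_left (hy hij) hb
  simpa using add_le_add h1 h2

theorem isClosed_setOf_antitone (n : ℕ) : IsClosed {x : Fin n → ℝ | Antitone x} := by
  simp only [Antitone, Set.ofPred_forall]
  exact isClosed_iInter fun i => isClosed_iInter fun j => isClosed_iInter fun _ =>
    isClosed_le (continuous_apply j) (continuous_apply i)

open Filter Topology in
theorem Antitone.exists_pos_add_smul {n : ℕ} {u d : Fin n → ℝ} (hu : Antitone u)
    (hd : ∀ i j, u i = u j → d i = d j) : ∃ ε : ℝ, 0 < ε ∧ Antitone (u + ε • d) := by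
  have : ∀ᶠ ε in 𝓝[>] (0 : ℝ), ∀ i j, i ≤ j → u j + ε * d j ≤ u i + ε * d i := by
    refine eventually_all.2 fun i => eventually_all.2 fun j => ?_
    rcases (em (i ≤ j)).symm with h | h
    · exact .of_forall fun _ h' => absurd h' h
    rcases (hu h).eq_or_lt with h' | h'
    · exact .of_forall fun ε _ => by rw [h', hd _ _ h']
    · have h1 : Tendsto (fun ε : ℝ => u j + ε * d j) (𝓝[>] 0) (𝓝 (u j + 0 * d j)) :=
        (Continuous.tendsto (by fun_prop) 0).mono_left nhdsWithin_le_nhds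
      have h2 : Tendsto (fun ε : ℝ => u i + ε * d i) (𝓝[>] 0) (𝓝 (u i + 0 * d i)) :=
        (Continuous.tendsto (by fun_prop) 0).mono_left nhdsWithin_le_nhds
      filter_upwards [h1.eventually_lt h2 (by simpa using h')] with ε hε _ using hε.le
  obtain ⟨ε, h, hε⟩ := (this.and self_mem_nhdsWithin).exists
  exact ⟨ε, hε, fun i j hij => by simpa using h i j hij⟩

/-- Isotonic regression: every linear functional is dominated, on weakly decreasing vectors, by one
with weakly decreasing coefficients, and the two agree on vectors that are constant on the level
sets of these coefficients. -/
theorem exists_antitone_dominating {n : ℕ} (c : Fin n → ℝ) :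
    ∃ u : Fin n → ℝ, Antitone u ∧ (∀ x : Fin n → ℝ, Antitone x → ∑ i, c i * x i ≤ ∑ i, u i * x i) ∧
      ∀ d : Fin n → ℝ, (∀ i j, u i = u j → d i = d j) → ∑ i, u i * d i ≤ ∑ i, c i * d i := by
  let K : Set (EuclideanSpace ℝ (Fin n)) := (fun v i => v i) ⁻¹' {x : Fin n → ℝ | Antitone x}
  have hKc : IsClosed K := (isClosed_setOf_antitone n).preimage (by fun_prop)
  have hK : Convex ℝ K := (convex_setOf_antitone n).linear_preimage
    (EuclideanSpace.equiv (Fin n) ℝ : EuclideanSpace ℝ (Fin n) →ₗ[ℝ] (Fin n → ℝ))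
  obtain ⟨v, hv, hmin⟩ := exists_norm_eq_iInf_of_complete_convex (K := K)
    ⟨0, fun _ _ _ => le_rfl⟩ hKc.isComplete hK (WithLp.toLp 2 c)
  rw [norm_eq_iInf_iff_real_inner_le_zero hK hv] at hmin
  have key : ∀ d : Fin n → ℝ, Antitone (fun i => v i + d i) → ∑ i, (c i - v i) * d i ≤ 0 := by
    intro d hd
    have := hmin (WithLp.toLp 2 fun i => v i + d i) hd
    simpa [PiLp.inner_apply, mul_comm] using this
  refine ⟨v, hv, fun x hx => ?_, fun d hd => ?_⟩
  · have := key x fun i j hij => add_le_add (hv hij) (hx hij)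
    simp only [sub_mul, Finset.sum_sub_distrib] at this
    linarith
  · obtain ⟨ε, hε, h⟩ := Antitone.exists_pos_add_smul (u := v) (d := -d) hv
      fun i j hij => by simp [hd i j hij]
    have := key _ h
    have h' : ∑ i, (c i - v i) * (ε • -d) i = ε * (∑ i, v i * d i - ∑ i, c i * d i) := by
      rw [← Finset.sum_sub_distrib, Finset.mul_sum]
      exact Finset.sum_congr rfl fun i _ => by simp; ring
    rw [h'] at this
    linarith [nonpos_of_mul_nonpos_right this hε]

/-- Layer-cake summation: nonnegative sums over superlevel sets give a nonnegative weighted sum. -/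
theorem sum_mul_nonneg_of_superlevel {ι : Type*} [Fintype ι] (v g : ι → ℝ) (hv : ∀ i, 0 ≤ v i)
    (h : ∀ t, 0 ≤ t → 0 ≤ ∑ i, if t < v i then g i else 0) : 0 ≤ ∑ i, v i * g i := by
  induction hN : (Finset.univ.filter fun i => 0 < v i).card using Nat.strong_induction_on
    generalizing v with
  | _ N ih =>
    set S := Finset.univ.filter fun i => 0 < v i with hS
    rcases S.eq_empty_or_nonempty with he | hne
    · have : ∀ i, v i = 0 := by
        intro i
        have : i ∉ S := by simp [he]
        exact le_antisymm (by simpa [hS] using this) (hv i)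
      simp [this]
    obtain ⟨m, hm, hmin⟩ := S.exists_min_image v hne
    have hm0 : 0 < v m := by simpa [hS] using hm
    have hmin' : ∀ i, 0 < v i → v m ≤ v i := fun i hi => hmin i (by simpa [hS] using hi)
    have hrec := ih _ ?_ (fun i => max (v i - v m) 0) (fun i => le_max_right _ _) ?_ rfl
    · have hsplit : ∑ i, v i * g i =
          v m * (∑ i, if 0 < v i then g i else 0) + ∑ i, max (v i - v m) 0 * g i := by
        rw [Finset.mul_sum, ← Finset.sum_add_distrib]
        refine Finset.sum_congr rfl fun i _ => ?_
        split_ifs with hi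
        · rw [max_eq_left (sub_nonneg.2 (hmin' i hi))]; ring
        · have : v i = 0 := le_antisymm (not_lt.1 hi) (hv i)
          rw [this, max_eq_right (by linarith)]; ring
      rw [hsplit]
      have := mul_nonneg hm0.le (h 0 le_rfl)
      linarith
    · rw [← hN]
      refine Finset.card_lt_card ⟨fun i hi => ?_, fun hsub => ?_⟩
      · have : v m < v i := by simpa using hi
        simp only [hS, Finset.mem_filter_univ]
        linarith
      · simpa using hsub hm
    · intro t ht
      have := h (t + v m) (by linarith)
      refine this.trans_eq (Finset.sum_congr rfl fun i _ => ?_)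
      have : t + v m < v i ↔ t < max (v i - v m) 0 := by
        rw [lt_max_iff, lt_sub_iff_add_lt]
        exact ⟨.inl, fun h => h.resolve_right ht.not_gt⟩
      simp only [this]

/-- The coefficients of `(x_1 + ⋯ + x_k) - (x_{n-l+1} + ⋯ + x_n)`. -/
def headTail (n k l : ℕ) (i : Fin n) : ℝ :=
  (if (i : ℕ) < k then 1 else 0) - if n ≤ (i : ℕ) + l then 1 else 0

section Weights

variable {n k l : ℕ} {w : Fin n → Fin n → ℝ}

theorem sum_ite_val_lt (hk : k ≤ n) : ∑ i : Fin n, (if (i : ℕ) < k then (1 : ℝ) else 0) = k := by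
  rw [Finset.sum_boole, Fin.card_filter_val_lt, min_eq_right hk]

theorem sum_ite_le_val_add (hl : l ≤ n) :
    ∑ i : Fin n, (if n ≤ (i : ℕ) + l then (1 : ℝ) else 0) = l := by
  have h : ∀ i : Fin n, (if n ≤ (i : ℕ) + l then (1 : ℝ) else 0) =
      1 - if (i : ℕ) < n - l then (1 : ℝ) else 0 := by
    intro i
    split_ifs <;> first | omega | norm_num
  simp only [h, Finset.sum_sub_distrib, sum_ite_val_lt (Nat.sub_le n l), Nat.cast_sub hl]
  simp

theorem sum_max_headTail (hkl : k + l ≤ n) :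
    ∑ i, ∑ j, (if i = j then 0 else max (headTail n k l i + headTail n k l j) 0) =
      2 * (k * (n - 1 - l) : ℝ) := by
  let p : Fin n → ℝ := fun i => if (i : ℕ) < k then 1 else 0
  let q : Fin n → ℝ := fun i => 1 - if n ≤ (i : ℕ) + l then 1 else 0
  have hp : ∑ i, p i = k := sum_ite_val_lt (by omega)
  have hq : ∑ i, q i = n - l := by
    simp only [q, Finset.sum_sub_distrib, sum_ite_le_val_add (show l ≤ n by omega)]
    simp
  have h : ∀ i j, (if i = j then 0 else max (headTail n k l i + headTail n k l j) 0) =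
      p i * q j + p j * q i - if i = j then 2 * p i else 0 := by
    intro i j
    rcases eq_or_ne i j with rfl | hij
    · simp only [if_true, p, q]
      split_ifs <;> first | omega | norm_num
    · simp only [if_neg hij, headTail, p, q]
      split_ifs <;> first | omega | norm_num
  simp only [h, Finset.sum_sub_distrib, Finset.sum_add_distrib, ← Finset.mul_sum, ← Finset.sum_mul,
    hp, hq, Finset.sum_ite_eq, Finset.mem_univ, if_true]
  ring

theorem two_mul_sum_mul_sum (ψ : Fin n → ℝ) (hsymm : ∀ i j, w i j = w j i)
    (hdiag : ∀ i, w i i = 0) :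
    2 * ∑ i, ψ i * ∑ j, w i j = ∑ i, ∑ j, if i = j then 0 else (ψ i + ψ j) * w i j := by
  have h1 : ∑ i, ψ i * ∑ j, w i j = ∑ i, ∑ j, ψ i * w i j := by simp only [Finset.mul_sum]
  have h2 : ∑ i, ψ i * ∑ j, w i j = ∑ i, ∑ j, ψ j * w i j := by
    rw [h1, Finset.sum_comm]
    simp only [hsymm]
  rw [two_mul]
  nth_rewrite 1 [h1]
  rw [h2, ← Finset.sum_add_distrib]
  refine Finset.sum_congr rfl fun i _ => ?_
  rw [← Finset.sum_add_distrib]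
  refine Finset.sum_congr rfl fun j _ => ?_
  split_ifs with hij
  · simp [hij, hdiag]
  · ring

theorem two_mul_slack (hsymm : ∀ i j, w i j = w j i) (hdiag : ∀ i, w i i = 0) (hkl : k + l ≤ n) :
    2 * (k * (n - 1 - l) - ∑ i, headTail n k l i * ∑ j, w i j : ℝ) =
      ∑ i, ∑ j, if i = j then 0 else max (headTail n k l i + headTail n k l j) 0 -
        (headTail n k l i + headTail n k l j) * w i j := by
  rw [mul_sub, two_mul_sum_mul_sum _ hsymm hdiag, ← sum_max_headTail hkl, ← Finset.sum_sub_distrib]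
  refine Finset.sum_congr rfl fun i _ => ?_
  rw [← Finset.sum_sub_distrib]
  refine Finset.sum_congr rfl fun j _ => ?_
  split_ifs <;> simp

theorem max_sub_mul_nonneg {s u : ℝ} (hu : 0 ≤ u ∧ u ≤ 1) : 0 ≤ max s 0 - s * u := by
  rcases le_total s 0 with h | h
  · rw [max_eq_right h]; nlinarith
  · rw [max_eq_left h]; nlinarith

theorem sum_headTail_mul_le (hsymm : ∀ i j, w i j = w j i) (hdiag : ∀ i, w i i = 0)
    (hw : ∀ i j, 0 ≤ w i j ∧ w i j ≤ 1) (hkl : k + l ≤ n) :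
    ∑ i, headTail n k l i * ∑ j, w i j ≤ k * (n - 1 - l) := by
  have := two_mul_slack hsymm hdiag hkl
  have h : 0 ≤ ∑ i, ∑ j, if i = j then 0 else max (headTail n k l i + headTail n k l j) 0 -
      (headTail n k l i + headTail n k l j) * w i j := by
    refine Finset.sum_nonneg fun i _ => Finset.sum_nonneg fun j _ => ?_
    split_ifs
    exacts [le_rfl, max_sub_mul_nonneg (hw i j)]
  linarith

theorem sum_headTail_mul_lt (hsymm : ∀ i j, w i j = w j i) (hdiag : ∀ i, w i i = 0)
    (hw : ∀ i j, 0 ≤ w i j ∧ w i j ≤ 1) (hkl : k + l ≤ n) {i j : Fin n} (hij : i ≠ j)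
    (h : (0 < headTail n k l i + headTail n k l j ∧ w i j < 1) ∨
      (headTail n k l i + headTail n k l j < 0 ∧ 0 < w i j)) :
    ∑ i, headTail n k l i * ∑ j, w i j < k * (n - 1 - l) := by
  have := two_mul_slack hsymm hdiag hkl
  have hnn : ∀ i j, 0 ≤ if i = j then 0 else max (headTail n k l i + headTail n k l j) 0 -
      (headTail n k l i + headTail n k l j) * w i j := by
    intro i j
    split_ifs
    exacts [le_rfl, max_sub_mul_nonneg (hw i j)]
  have h : 0 < ∑ i, ∑ j, if i = j then 0 else max (headTail n k l i + headTail n k l j) 0 -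
      (headTail n k l i + headTail n k l j) * w i j := by
    refine Finset.sum_pos' (fun i _ => Finset.sum_nonneg fun j _ => hnn i j)
      ⟨i, Finset.mem_univ i, ?_⟩
    refine Finset.sum_pos' (fun j _ => hnn i j) ⟨j, Finset.mem_univ j, ?_⟩
    rw [if_neg hij]
    rcases h with ⟨h, h'⟩ | ⟨h, h'⟩
    · rw [max_eq_left h.le]; nlinarith
    · rw [max_eq_right h.le]; nlinarith
  linarith

theorem sum_headTail_mul_eq (hsymm : ∀ i j, w i j = w j i) (hdiag : ∀ i, w i i = 0)
    (hkl : k + l ≤ n)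
    (h : ∀ i j, i ≠ j → (0 < headTail n k l i + headTail n k l j → w i j = 1) ∧
      (headTail n k l i + headTail n k l j < 0 → w i j = 0)) :
    ∑ i, headTail n k l i * ∑ j, w i j = k * (n - 1 - l) := by
  have := two_mul_slack hsymm hdiag hkl
  rw [Finset.sum_eq_zero fun i _ => Finset.sum_eq_zero fun j _ => ?_] at this
  · linarith
  split_ifs with hij
  · rfl
  rcases lt_trichotomy (headTail n k l i + headTail n k l j) 0 with h' | h' | h'
  · rw [max_eq_right h'.le, (h i j hij).2 h']; ring
  · simp [h']
  · rw [max_eq_left h'.le, (h i j hij).1 h']; ring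

end Weights

/-- The unit step function, with value `θ` at `0`. -/
noncomputable def step (θ t : ℝ) : ℝ := if 0 < t then 1 else if t < 0 then 0 else θ

theorem step_of_pos {θ t : ℝ} (h : 0 < t) : step θ t = 1 := if_pos h

theorem step_of_neg {θ t : ℝ} (h : t < 0) : step θ t = 0 := by simp [step, h, h.le]

theorem step_zero {θ : ℝ} : step θ 0 = θ := by simp [step]

theorem step_mem {θ : ℝ} (hθ : 0 ≤ θ ∧ θ ≤ 1) (t : ℝ) : 0 ≤ step θ t ∧ step θ t ≤ 1 := by
  unfold step
  split_ifs <;> simp [hθ]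

theorem step_mono {θ : ℝ} (hθ : 0 ≤ θ ∧ θ ≤ 1) : Monotone (step θ) := by
  intro s t hst
  rcases lt_trichotomy s 0 with hs | rfl | hs
  · rw [step_of_neg hs]
    exact (step_mem hθ t).1
  · rcases hst.eq_or_lt with rfl | ht
    · rfl
    · rw [step_of_pos ht]
      exact (step_mem hθ 0).2
  · rw [step_of_pos hs, step_of_pos (hs.trans_le hst)]

/-- The weights of the (fractional) threshold graph with vertex weights `c`. -/
noncomputable def thresholdWeight {n : ℕ} (θ : ℝ) (c : Fin n → ℝ) (i j : Fin n) : ℝ :=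
  if i = j then 0 else step θ (c i + c j)

/-- The degrees of the (fractional) threshold graph with vertex weights `c`. -/
noncomputable def thresholdDegree {n : ℕ} (θ : ℝ) (c : Fin n → ℝ) (i : Fin n) : ℝ :=
  ∑ j, thresholdWeight θ c i j

section Threshold

variable {n : ℕ} {θ : ℝ} {c : Fin n → ℝ}

theorem thresholdWeight_comm (i j : Fin n) : thresholdWeight θ c i j = thresholdWeight θ c j i := by
  simp only [thresholdWeight, eq_comm (a := i), add_comm (c i)]

theorem thresholdWeight_self (i : Fin n) : thresholdWeight θ c i i = 0 := if_pos rfl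

theorem thresholdWeight_of_ne {i j : Fin n} (h : i ≠ j) :
    thresholdWeight θ c i j = step θ (c i + c j) := if_neg h

theorem thresholdWeight_mem (hθ : 0 ≤ θ ∧ θ ≤ 1) (i j : Fin n) :
    0 ≤ thresholdWeight θ c i j ∧ thresholdWeight θ c i j ≤ 1 := by
  unfold thresholdWeight
  split_ifs
  · simp
  · exact step_mem hθ _

theorem thresholdWeight_swap_le (hθ : 0 ≤ θ ∧ θ ≤ 1) {i j : Fin n} (h : c j ≤ c i) (m : Fin n) :
    thresholdWeight θ c j (Equiv.swap i j m) ≤ thresholdWeight θ c i m := by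
  rcases eq_or_ne m i with rfl | hi
  · simp [thresholdWeight_self]
  rcases eq_or_ne m j with rfl | hj
  · simp [thresholdWeight_comm]
  rw [Equiv.swap_apply_of_ne_of_ne hi hj, thresholdWeight_of_ne hi.symm,
    thresholdWeight_of_ne hj.symm]
  exact step_mono hθ (by linarith)

theorem thresholdDegree_le (hθ : 0 ≤ θ ∧ θ ≤ 1) {i j : Fin n} (h : c j ≤ c i) :
    thresholdDegree θ c j ≤ thresholdDegree θ c i := by
  rw [thresholdDegree, ← Equiv.sum_comp (Equiv.swap i j)]
  exact Finset.sum_le_sum fun m _ => thresholdWeight_swap_le hθ h m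

theorem thresholdDegree_lt (hθ : 0 ≤ θ ∧ θ ≤ 1) {i j m : Fin n} (h : c j ≤ c i) (hi : m ≠ i)
    (hj : m ≠ j) (hm : step θ (c j + c m) < step θ (c i + c m)) :
    thresholdDegree θ c j < thresholdDegree θ c i := by
  rw [thresholdDegree, ← Equiv.sum_comp (Equiv.swap i j)]
  refine Finset.sum_lt_sum (fun m _ => thresholdWeight_swap_le hθ h m) ⟨m, Finset.mem_univ m, ?_⟩
  rwa [Equiv.swap_apply_of_ne_of_ne hi hj, thresholdWeight_of_ne hi.symm,
    thresholdWeight_of_ne hj.symm]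

theorem thresholdDegree_antitone (hθ : 0 ≤ θ ∧ θ ≤ 1) (hc : Antitone c) :
    Antitone (thresholdDegree θ c) := fun _ _ hij => thresholdDegree_le hθ (hc hij)

theorem thresholdDegree_congr (hθ : 0 ≤ θ ∧ θ ≤ 1) {i j : Fin n} (h : c i = c j) :
    thresholdDegree θ c i = thresholdDegree θ c j :=
  le_antisymm (thresholdDegree_le hθ h.le) (thresholdDegree_le hθ h.ge)

end Threshold

/-- The polyhedron of weakly decreasing vectors satisfying all inequalities of Koren type. -/
def korenPolyhedron (n : ℕ) : Set (Fin n → ℝ) :=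
  {x | Antitone x ∧ ∀ k l : ℕ, k + l ≤ n → ∑ i, headTail n k l i * x i ≤ k * (n - 1 - l)}

theorem exists_lt_iff_of_antitone {n : ℕ} (p : Fin n → Prop) (hp : ∀ i j, i ≤ j → p j → p i) :
    ∃ k ≤ n, ∀ i : Fin n, (i : ℕ) < k ↔ p i := by
  classical
  by_cases h : ∃ k, ∃ hk : k < n, ¬ p ⟨k, hk⟩
  · obtain ⟨hk, hpk⟩ := Nat.find_spec h
    refine ⟨Nat.find h, hk.le, fun i => ⟨fun hi => ?_, fun hi => ?_⟩⟩
    · simpa using Nat.find_min h hi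
    · by_contra hlt
      exact hpk (hp _ i (Fin.le_def.2 (not_lt.1 hlt)) hi)
  · push Not at h
    exact ⟨n, le_rfl, fun i => by simp [h i i.2]⟩

theorem sum_mul_le_sum_mul_thresholdDegree {n : ℕ} {u x : Fin n → ℝ} (hu : Antitone u)
    (hx : x ∈ korenPolyhedron n) : ∑ i, u i * x i ≤ ∑ i, u i * thresholdDegree 0 u i := by
  set d := thresholdDegree 0 u with hd
  have key := sum_mul_nonneg_of_superlevel (fun i => |u i|)
    (fun i => if 0 < u i then d i - x i else x i - d i) (fun i => abs_nonneg _) ?_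
  · have : ∀ i, |u i| * (if 0 < u i then d i - x i else x i - d i) = u i * d i - u i * x i := by
      intro i
      split_ifs with h
      · rw [abs_of_pos h]; ring
      · rw [abs_of_nonpos (not_lt.1 h)]; ring
    simp only [this, Finset.sum_sub_distrib] at key
    linarith
  intro t ht
  obtain ⟨k, hk, hk'⟩ := exists_lt_iff_of_antitone (fun i => t < u i)
    fun i j hij h => h.trans_le (hu hij)
  obtain ⟨m, hm, hm'⟩ := exists_lt_iff_of_antitone (fun i => -t ≤ u i)
    fun i j hij h => h.trans (hu hij)
  have hkm : k ≤ m := by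
    by_contra! h
    have h1 := (hk' ⟨m, by omega⟩).1 h
    have h2 := (hm' ⟨m, by omega⟩).2 (by linarith)
    exact lt_irrefl _ h2
  have hψ : ∀ i, headTail n k (n - m) i =
      (if t < u i then 1 else 0) - if u i < -t then 1 else 0 := by
    intro i
    have : n ≤ (i : ℕ) + (n - m) ↔ u i < -t := by
      rw [← not_le, ← hm' i]
      omega
    simp only [headTail, hk', this]
  have htight : ∑ i, headTail n k (n - m) i * d i = k * (n - 1 - (n - m : ℕ)) := by
    refine sum_headTail_mul_eq thresholdWeight_comm thresholdWeight_self (by omega)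
      fun i j hij => ⟨fun h => ?_, fun h => ?_⟩
    · rw [thresholdWeight_of_ne hij, step_of_pos]
      rw [hψ, hψ] at h
      split_ifs at h <;> linarith
    · rw [thresholdWeight_of_ne hij]
      have : u i + u j < 0 := by
        rw [hψ, hψ] at h
        split_ifs at h <;> linarith
      rw [step_of_neg this]
  have hle := hx.2 k (n - m) (by omega)
  have : ∀ i, (if t < |u i| then (if 0 < u i then d i - x i else x i - d i) else 0) =
      headTail n k (n - m) i * d i - headTail n k (n - m) i * x i := by
    intro i
    rw [hψ]
    rcases lt_or_ge 0 (u i) with h | h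
    · rw [abs_of_pos h, if_pos h, if_neg (show ¬ u i < -t by linarith)]
      split_ifs <;> ring
    · rw [abs_of_nonpos h, if_neg h.not_gt, if_neg (show ¬ t < u i by linarith)]
      simp only [lt_neg]
      split_ifs <;> ring
  simp only [this, Finset.sum_sub_distrib]
  linarith

theorem convex_korenPolyhedron (n : ℕ) : Convex ℝ (korenPolyhedron n) := by
  intro x hx y hy a b ha hb hab
  refine ⟨convex_setOf_antitone n hx.1 hy.1 ha hb hab, fun k l hkl => ?_⟩
  have h : ∑ i, headTail n k l i * (a • x + b • y) i =
      a * ∑ i, headTail n k l i * x i + b * ∑ i, headTail n k l i * y i := by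
    simp only [Finset.mul_sum, ← Finset.sum_add_distrib, Pi.add_apply, Pi.smul_apply, smul_eq_mul]
    exact Finset.sum_congr rfl fun i _ => by ring
  rw [h]
  have h1 := mul_le_mul_of_nonneg_left (hx.2 k l hkl) ha
  have h2 := mul_le_mul_of_nonneg_left (hy.2 k l hkl) hb
  refine (add_le_add h1 h2).trans_eq ?_
  rw [← add_mul, hab, one_mul]

theorem degC_eq_sum {n : ℕ} (G : SimpleGraph (Fin n)) [DecidableRel G.Adj] (v : Fin n) :
    (degC G v : ℝ) = ∑ j, if G.Adj v j then (1 : ℝ) else 0 := by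
  rw [Finset.sum_boole, degC]
  congr!

theorem DP_subset_korenPolyhedron (n : ℕ) : DP n ⊆ korenPolyhedron n := by
  classical
  refine convexHull_min ?_ (convex_korenPolyhedron n)
  rintro x ⟨hx, G, σ, hG⟩
  refine ⟨hx, fun k l hkl => ?_⟩
  have : ∀ i, x i = ∑ j, if G.Adj (σ i) (σ j) then (1 : ℝ) else 0 := by
    intro i
    rw [hG, degC_eq_sum]
    exact (Equiv.sum_comp σ fun j => if G.Adj (σ i) j then (1 : ℝ) else 0).symm
  simp only [this]
  refine sum_headTail_mul_le (fun i j => by simp only [G.adj_comm]) (fun i => by simp)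
    (fun i j => ?_) hkl
  split_ifs <;> simp

theorem isClosed_DP (n : ℕ) : IsClosed (DP n) := by
  refine (Set.Finite.isCompact_convexHull ℝ ?_).isClosed
  refine (Set.finite_range fun p : SimpleGraph (Fin n) × Equiv.Perm (Fin n) =>
    fun i => (degC p.1 (p.2 i) : ℝ)).subset ?_
  rintro x ⟨-, G, σ, h⟩
  exact ⟨(G, σ), (funext h).symm⟩

theorem thresholdDegree_mem_DP {n : ℕ} {u : Fin n → ℝ} (hu : Antitone u) :
    thresholdDegree 0 u ∈ DP n := by
  classical
  refine subset_convexHull ℝ _ ⟨thresholdDegree_antitone (by norm_num) hu,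
    ⟨fun i j => i ≠ j ∧ 0 < u i + u j, ⟨fun i j h => ⟨h.1.symm, add_comm (u i) _ ▸ h.2⟩⟩,
      ⟨fun i h => h.1 rfl⟩⟩, 1, fun i => ?_⟩
  rw [degC_eq_sum]
  refine Finset.sum_congr rfl fun j _ => ?_
  simp only [Equiv.Perm.one_apply, thresholdWeight, step]
  split_ifs <;> simp_all

theorem DP_eq_korenPolyhedron (n : ℕ) : DP n = korenPolyhedron n := by
  refine (DP_subset_korenPolyhedron n).antisymm fun x hx => ?_
  by_contra hxD
  obtain ⟨f, r, hfr, hr⟩ :=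
    geometric_hahn_banach_closed_point (convex_convexHull ℝ _) (isClosed_DP n) hxD
  have hf : ∀ y : Fin n → ℝ, f y = ∑ i, f (Pi.single i 1) * y i := by
    intro y
    have := (f : (Fin n → ℝ) →ₗ[ℝ] ℝ).pi_apply_eq_sum_univ y
    simp only [ContinuousLinearMap.coe_coe, smul_eq_mul] at this
    rw [this]
    refine Finset.sum_congr rfl fun i _ => ?_
    rw [mul_comm]
    congr 2
    ext j
    simp [Pi.single_apply, eq_comm]
  obtain ⟨u, hu, hdom, hlevel⟩ := exists_antitone_dominating fun i => f (Pi.single i 1)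
  have h1 := hdom x hx.1
  have h2 := sum_mul_le_sum_mul_thresholdDegree hu hx
  have h3 := hlevel (thresholdDegree 0 u) fun i j => thresholdDegree_congr (by norm_num)
  have h4 := hfr _ (thresholdDegree_mem_DP hu)
  rw [hf] at h4 hr
  linarith

theorem antitone_of_fin_succ_le {n : ℕ} {x : Fin n → ℝ}
    (h : ∀ (i : ℕ) (hi : i + 1 < n), x ⟨i + 1, hi⟩ ≤ x ⟨i, by omega⟩) : Antitone x := by
  rcases n with _ | n
  · exact fun i => i.elim0
  · exact Fin.antitone_iff_succ_le.2 fun i => h i (by omega)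

theorem headTail_antitone (n k l : ℕ) : Antitone (headTail n k l) := by
  intro i j hij
  have : (i : ℕ) ≤ j := hij
  simp only [headTail]
  split_ifs <;> first | omega | norm_num

/-- The pairs `(k, l)` whose Koren inequality defines a facet of `DP n`. -/
def facetPairs (n : ℕ) : Finset (ℕ × ℕ) :=
  {(1, 0), (0, 1)} ∪ (Finset.HasAntidiagonal.antidiagonal (n - 2) ∪
    (Finset.range (n - 4)).biUnion Finset.HasAntidiagonal.antidiagonal).image
      (Prod.map (· + 1) (· + 1))

theorem mem_facetPairs {n k l : ℕ} (hn : 4 ≤ n) :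
    (k, l) ∈ facetPairs n ↔
      (k = 1 ∧ l = 0) ∨ (k = 0 ∧ l = 1) ∨ (1 ≤ k ∧ 1 ≤ l ∧ (k + l = n ∨ k + l + 3 ≤ n)) := by
  simp only [facetPairs, Finset.mem_union, Finset.mem_insert, Finset.mem_singleton, Prod.mk.injEq,
    Finset.mem_image, Finset.mem_biUnion, Finset.mem_range, Finset.HasAntidiagonal.mem_antidiagonal,
    Prod.exists, Prod.map_apply, or_assoc]
  refine or_congr_right (or_congr_right ⟨?_, fun h => ⟨k - 1, l - 1, ?_, by omega, by omega⟩⟩)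
  · rintro ⟨a, b, h | ⟨m, hm, h⟩, rfl, rfl⟩ <;> omega
  · rcases h with ⟨hk, hl, h | h⟩
    · left; omega
    · exact .inr ⟨_, by omega, rfl⟩

theorem card_facetPairs {n : ℕ} (hn : 4 ≤ n) :
    2 * (facetPairs n).card = 4 + 2 * (n - 1) + (n - 4) * (n - 3) := by
  have hinj : Function.Injective (Prod.map (· + 1) (· + 1) : ℕ × ℕ → ℕ × ℕ) :=
    (add_left_injective 1).prodMap (add_left_injective 1)
  have hdisj : ((Finset.range (n - 4) : Finset ℕ) : Set ℕ).PairwiseDisjoint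
      fun m => Finset.HasAntidiagonal.antidiagonal m := by
    intro a _ b _ hab
    simp only [Function.onFun, Finset.disjoint_left, Finset.HasAntidiagonal.mem_antidiagonal]
    omega
  rw [facetPairs, Finset.card_union_of_disjoint, Finset.card_image_of_injective _ hinj,
    Finset.card_union_of_disjoint, Finset.card_biUnion hdisj]
  · simp only [Finset.Nat.card_antidiagonal, Finset.sum_add_distrib]
    have := Finset.sum_range_id_mul_two (n - 4)
    obtain ⟨m, rfl⟩ := Nat.exists_eq_add_of_le' hn
    have h : Finset.card {((1 : ℕ), (0 : ℕ)), (0, 1)} = 2 := rfl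
    rw [h]
    simp only [Nat.add_sub_cancel, show m + 4 - 2 = m + 2 by omega, show m + 4 - 1 = m + 3 by omega,
      show m + 4 - 3 = m + 1 by omega, Finset.sum_const, Finset.card_range, smul_eq_mul] at this ⊢
    rcases m with _ | m
    · simp
    · rw [Nat.add_sub_cancel] at this
      linarith
  · simp only [Finset.disjoint_left, Finset.mem_biUnion, Finset.mem_range,
      Finset.HasAntidiagonal.mem_antidiagonal, not_exists, not_and]
    intro a h m hm
    omega
  · simp [Finset.disjoint_left]

section Redundancy

variable {n : ℕ} {x : Fin n → ℝ}

theorem sum_headTail_zero_right_le (hx : Antitone x) (hn : 0 < n)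
    (h : ∑ i, headTail n 1 0 i * x i ≤ (1 : ℕ) * (n - 1 - (0 : ℕ))) {k : ℕ} (hk : k ≤ n) :
    ∑ i, headTail n k 0 i * x i ≤ k * (n - 1 - (0 : ℕ)) := by
  have h0 : ∀ (k : ℕ) (i : Fin n), headTail n k 0 i = if (i : ℕ) < k then 1 else 0 := by
    intro k i
    simp [headTail]
  have h1 : x ⟨0, hn⟩ ≤ n - 1 := by
    rw [Finset.sum_eq_single ⟨0, hn⟩] at h
    · simpa [h0] using h
    · intro i _ hi
      have : (i : ℕ) ≠ 0 := fun h => hi (Fin.ext h)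
      simp [h0, this]
    · simp
  simp only [h0, Nat.cast_zero, sub_zero]
  rw [← sum_ite_val_lt hk, Finset.sum_mul]
  refine Finset.sum_le_sum fun i _ => mul_le_mul_of_nonneg_left ?_ (by split_ifs <;> simp)
  exact (hx (Fin.le_def.2 (Nat.zero_le _))).trans h1

theorem sum_headTail_zero_left_le (hx : Antitone x) (hn : 0 < n)
    (h : ∑ i, headTail n 0 1 i * x i ≤ (0 : ℕ) * (n - 1 - (1 : ℕ))) (l : ℕ) :
    ∑ i, headTail n 0 l i * x i ≤ (0 : ℕ) * (n - 1 - l) := by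
  have h0 : ∀ (l : ℕ) (i : Fin n), headTail n 0 l i = -if n ≤ (i : ℕ) + l then 1 else 0 := by
    intro l i
    simp [headTail]
  have h1 : 0 ≤ x ⟨n - 1, by omega⟩ := by
    rw [Finset.sum_eq_single ⟨n - 1, by omega⟩] at h
    · have : n ≤ n - 1 + 1 := by omega
      simpa [h0, this] using h
    · intro i _ hi
      have : ¬ n ≤ (i : ℕ) + 1 := fun h => hi (Fin.ext (by simp only; omega))
      simp [h0, this]
    · simp
  simp only [h0, Nat.cast_zero, zero_mul]
  refine Finset.sum_nonpos fun i _ => mul_nonpos_of_nonpos_of_nonneg (by split_ifs <;> simp) ?_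
  exact h1.trans (hx (Fin.le_def.2 (by simp only; omega)))

theorem sum_headTail_le_of_add_one_eq {k l : ℕ} (hkl : k + l + 1 = n)
    (h1 : ∑ i, headTail n (k + 1) l i * x i ≤ (k + 1 : ℕ) * (n - 1 - l))
    (h2 : ∑ i, headTail n k (l + 1) i * x i ≤ k * (n - 1 - (l + 1 : ℕ))) :
    ∑ i, headTail n k l i * x i ≤ k * (n - 1 - l) := by
  have h : ∀ i, headTail n k l i + headTail n k l i =
      headTail n (k + 1) l i + headTail n k (l + 1) i := by
    intro i
    simp only [headTail]
    split_ifs <;> first | omega | norm_num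
  have hsum : ∑ i, headTail n k l i * x i + ∑ i, headTail n k l i * x i =
      ∑ i, headTail n (k + 1) l i * x i + ∑ i, headTail n k (l + 1) i * x i := by
    simp only [← Finset.sum_add_distrib, ← add_mul, h]
  have hn : (n : ℝ) = k + l + 1 := by exact_mod_cast hkl.symm
  rw [hn] at h1 h2 ⊢
  push_cast at h1 h2
  linarith

theorem sum_headTail_le_of_add_two_eq (hx : Antitone x) {k l : ℕ} (hkl : k + l + 2 = n)
    (h : ∑ i, headTail n (k + 1) (l + 1) i * x i ≤ (k + 1 : ℕ) * (n - 1 - (l + 1 : ℕ))) :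
    ∑ i, headTail n k l i * x i ≤ k * (n - 1 - l) := by
  let a : Fin n := ⟨k, by omega⟩
  let b : Fin n := ⟨k + 1, by omega⟩
  have heq : ∀ i, headTail n (k + 1) (l + 1) i * x i = headTail n k l i * x i +
      ((if i = a then x a else 0) - if i = b then x b else 0) := by
    intro i
    have hab : a ≠ b := by simp [a, b]
    rcases eq_or_ne i a with rfl | ha
    · simp only [if_neg hab, if_true, headTail, a]
      split_ifs <;> first | omega | ring
    rcases eq_or_ne i b with rfl | hb
    · simp only [if_neg ha, if_true, headTail, b]
      split_ifs <;> first | omega | ring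
    have ha' : (i : ℕ) ≠ k := fun h => ha (Fin.ext h)
    have hb' : (i : ℕ) ≠ k + 1 := fun h => hb (Fin.ext h)
    simp only [if_neg ha, if_neg hb, headTail]
    split_ifs <;> first | omega | ring
  simp only [heq, Finset.sum_add_distrib, Finset.sum_sub_distrib, Finset.sum_ite_eq',
    Finset.mem_univ, if_true] at h
  have hab : x b ≤ x a := hx (Fin.le_def.2 (by simp [a, b]))
  have hn : (n : ℝ) = k + l + 2 := by exact_mod_cast hkl.symm
  rw [hn] at h ⊢
  push_cast at h
  linarith

theorem mem_korenPolyhedron_of_facetPairs (hn : 4 ≤ n) (hx : Antitone x)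
    (h : ∀ k l, (k, l) ∈ facetPairs n → ∑ i, headTail n k l i * x i ≤ k * (n - 1 - l)) :
    x ∈ korenPolyhedron n := by
  refine ⟨hx, fun k l hkl => ?_⟩
  rcases Nat.eq_zero_or_pos l with rfl | hl
  · exact sum_headTail_zero_right_le hx (by omega)
      (h 1 0 ((mem_facetPairs hn).2 (by omega))) (by omega)
  rcases Nat.eq_zero_or_pos k with rfl | hk
  · exact sum_headTail_zero_left_le hx (by omega) (h 0 1 ((mem_facetPairs hn).2 (by omega))) l
  by_cases h1 : k + l + 1 = n
  · exact sum_headTail_le_of_add_one_eq h1 (h _ _ ((mem_facetPairs hn).2 (by omega)))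
      (h _ _ ((mem_facetPairs hn).2 (by omega)))
  by_cases h2 : k + l + 2 = n
  · exact sum_headTail_le_of_add_two_eq hx h2 (h _ _ ((mem_facetPairs hn).2 (by omega)))
  exact h k l ((mem_facetPairs hn).2 (by omega))

end Redundancy

section Irredundancy

variable {n k l k' l' : ℕ}

theorem exists_headTail_violation (hn : 4 ≤ n) (h : (k, l) ∈ facetPairs n ∨ (k = 0 ∧ l = 0))
    (h' : (k', l') ∈ facetPairs n) (hne : ¬ (k' = k ∧ l' = l)) :
    ∃ i j : Fin n, i ≠ j ∧
      ((0 < headTail n k' l' i + headTail n k' l' j ∧ headTail n k l i + headTail n k l j ≤ 0) ∨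
      (headTail n k' l' i + headTail n k' l' j < 0 ∧ 0 ≤ headTail n k l i + headTail n k l j)) := by
  rw [mem_facetPairs hn] at h h'
  simp only [Fin.exists_iff, ne_eq, Fin.mk.injEq, headTail]
  by_cases hA : k < k' ∧ k' + l' < n
  · refine ⟨k' - 1, by omega, k', by omega, by omega, .inl ⟨?_, ?_⟩⟩ <;>
      split_ifs <;> first | omega | norm_num
  by_cases hB : l < l' ∧ k' + l' < n
  · refine ⟨n - l', by omega, n - l' - 1, by omega, by omega, .inr ⟨?_, ?_⟩⟩ <;>
      split_ifs <;> first | omega | norm_num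
  by_cases hC : k + 2 ≤ k' ∨ (k < k' ∧ k + l = n)
  · refine ⟨k' - 1, by omega, k' - 2, by omega, by omega, .inl ⟨?_, ?_⟩⟩ <;>
      split_ifs <;> first | omega | norm_num
  by_cases hD : l + 2 ≤ l' ∨ (l < l' ∧ k + l = n)
  · refine ⟨n - l', by omega, n - l' + 1, by omega, by omega, .inr ⟨?_, ?_⟩⟩ <;>
      split_ifs <;> first | omega | norm_num
  by_cases hE : 1 ≤ k' ∧ l' < l
  · refine ⟨0, by omega, n - l, by omega, by omega, .inl ⟨?_, ?_⟩⟩ <;>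
      split_ifs <;> first | omega | norm_num
  · refine ⟨n - 1, by omega, k', by omega, by omega, .inr ⟨?_, ?_⟩⟩ <;>
      split_ifs <;> first | omega | norm_num

theorem sum_headTail_mul_thresholdDegree_lt (hn : 4 ≤ n)
    (h : (k, l) ∈ facetPairs n ∨ (k = 0 ∧ l = 0)) (h' : (k', l') ∈ facetPairs n)
    (hne : ¬ (k' = k ∧ l' = l)) :
    ∑ i, headTail n k' l' i * thresholdDegree (1 / 2) (headTail n k l) i < k' * (n - 1 - l') := by
  obtain ⟨i, j, hij, hv⟩ := exists_headTail_violation hn h h' hne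
  rw [mem_facetPairs hn] at h'
  refine sum_headTail_mul_lt thresholdWeight_comm thresholdWeight_self
    (thresholdWeight_mem (by norm_num)) (by omega) hij ?_
  rw [thresholdWeight_of_ne hij]
  refine hv.imp (And.imp_right fun h => ?_) (And.imp_right fun h => ?_)
  · rcases h.eq_or_lt with h | h
    · rw [h, step_zero]; norm_num
    · rw [step_of_neg h]; norm_num
  · rcases h.eq_or_lt with h | h
    · rw [← h, step_zero]; norm_num
    · rw [step_of_pos h]; norm_num

theorem sum_headTail_mul_thresholdDegree_self (hn : 4 ≤ n) (h : (k, l) ∈ facetPairs n) :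
    ∑ i, headTail n k l i * thresholdDegree (1 / 2) (headTail n k l) i = k * (n - 1 - l) := by
  rw [mem_facetPairs hn] at h
  refine sum_headTail_mul_eq thresholdWeight_comm thresholdWeight_self (by omega)
    fun i j hij => ⟨fun h => ?_, fun h => ?_⟩
  · rw [thresholdWeight_of_ne hij, step_of_pos h]
  · rw [thresholdWeight_of_ne hij, step_of_neg h]

theorem thresholdDegree_headTail_succ_lt (hn : 4 ≤ n) (h : (k, l) ∈ facetPairs n) {i j : Fin n}
    (hij : (j : ℕ) = i + 1) (hne : headTail n k l j ≠ headTail n k l i) :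
    thresholdDegree (1 / 2) (headTail n k l) j < thresholdDegree (1 / 2) (headTail n k l) i := by
  rw [mem_facetPairs hn] at h
  have hj := j.2
  have hle : headTail n k l j ≤ headTail n k l i :=
    headTail_antitone n k l (Fin.le_def.2 (by omega))
  have hcase : ((i : ℕ) + 1 = k ∧ k + l + 3 ≤ n) ∨ ((i : ℕ) + 1 = k ∧ k + l = n) ∨
      ((i : ℕ) + 1 + l = n ∧ k + l + 3 ≤ n) := by
    by_contra hcon
    apply hne
    simp only [headTail]
    split_ifs <;> first | omega | norm_num
  obtain ⟨m, hm, hmi, hmj, hlt⟩ : ∃ m, ∃ hm : m < n, m ≠ (i : ℕ) ∧ m ≠ (j : ℕ) ∧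
      step (1 / 2) (headTail n k l j + headTail n k l ⟨m, hm⟩) <
        step (1 / 2) (headTail n k l i + headTail n k l ⟨m, hm⟩) := by
    rcases hcase with ⟨h1, h2⟩ | ⟨h1, h2⟩ | ⟨h1, h2⟩
    · refine ⟨k + 1, by omega, by omega, by omega, ?_⟩
      simp only [headTail]
      split_ifs <;> first | omega | norm_num [step]
    · rcases Nat.eq_zero_or_pos (i : ℕ) with hi | hi
      · refine ⟨n - 1, by omega, by omega, by omega, ?_⟩
        simp only [headTail]
        split_ifs <;> first | omega | norm_num [step]
      · refine ⟨0, by omega, by omega, by omega, ?_⟩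
        simp only [headTail]
        split_ifs <;> first | omega | norm_num [step]
    · refine ⟨i - 1, by omega, by omega, by omega, ?_⟩
      simp only [headTail]
      split_ifs <;> first | omega | norm_num [step]
  exact thresholdDegree_lt (by norm_num) hle (fun h => hmi (congrArg Fin.val h))
    (fun h => hmj (congrArg Fin.val h)) hlt

end Irredundancy

/-- The left-hand sides of the inequalities defining the facets of `DP n`. -/
noncomputable def facetFunctional (n : ℕ) :
    Fin (n - 1) ⊕ facetPairs n → StrongDual ℝ (Fin n → ℝ)
  | .inl i => ContinuousLinearMap.proj ⟨i + 1, by omega⟩ - ContinuousLinearMap.proj ⟨i, by omega⟩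
  | .inr p => ∑ i, headTail n p.1.1 p.1.2 i • ContinuousLinearMap.proj i

/-- The right-hand sides of the inequalities defining the facets of `DP n`. -/
def facetBound (n : ℕ) : Fin (n - 1) ⊕ facetPairs n → ℝ
  | .inl _ => 0
  | .inr p => p.1.1 * (n - 1 - p.1.2)

section System

variable {n : ℕ}

theorem facetFunctional_inl (i : Fin (n - 1)) (x : Fin n → ℝ) :
    facetFunctional n (.inl i) x = x ⟨i + 1, by omega⟩ - x ⟨i, by omega⟩ := rfl

theorem facetFunctional_inr (p : facetPairs n) (x : Fin n → ℝ) :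
    facetFunctional n (.inr p) x = ∑ i, headTail n p.1.1 p.1.2 i * x i := by
  simp [facetFunctional]

theorem DP_eq_setOf_forall_le (hn : 4 ≤ n) :
    DP n = {x | ∀ j, facetFunctional n j x ≤ facetBound n j} := by
  rw [DP_eq_korenPolyhedron]
  ext x
  constructor
  · rintro ⟨hx, h⟩ (i | ⟨⟨k, l⟩, hp⟩)
    · rw [facetFunctional_inl]
      exact sub_nonpos.2 (hx (Fin.le_def.2 (by simp)))
    · rw [facetFunctional_inr]
      rw [mem_facetPairs hn] at hp
      exact h k l (by omega)
  · intro h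
    refine mem_korenPolyhedron_of_facetPairs hn (antitone_of_fin_succ_le fun i hi => ?_)
      fun k l hp => ?_
    · have := h (.inl ⟨i, Nat.lt_sub_of_add_lt hi⟩)
      rw [facetFunctional_inl] at this
      exact sub_nonpos.1 this
    · have := h (.inr ⟨(k, l), hp⟩)
      rwa [facetFunctional_inr] at this

theorem exists_only_tight_inl (hn : 4 ≤ n) (i : Fin (n - 1)) :
    ∃ z, facetFunctional n (.inl i) z = facetBound n (.inl i) ∧
      ∀ j, j ≠ .inl i → facetFunctional n j z < facetBound n j := by
  let p : Fin n → ℝ := thresholdDegree (1 / 2) (headTail n 0 0)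
  let v : Fin n → ℝ := fun j => if (j : ℕ) ≤ i then -(j : ℝ) else 1 - j
  have hp : ∀ a b, p a = p b := by
    intro a b
    refine thresholdDegree_congr (by norm_num) ?_
    simp [headTail, not_le.2 a.2, not_le.2 b.2]
  obtain ⟨ε, -, h⟩ : ∃ ε : ℝ, 0 < ε ∧
      ∀ j : {j : Fin (n - 1) ⊕ facetPairs n // j ≠ .inl i},
        facetFunctional n j (p + ε • v) < facetBound n j := by
    refine exists_pos_forall_lt_add_smul
      (fun j : {j : Fin (n - 1) ⊕ facetPairs n // j ≠ .inl i} =>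
        (facetFunctional n j : (Fin n → ℝ) →ₗ[ℝ] ℝ)) (fun j => facetBound n j.1) p v ?_
    rintro ⟨j | ⟨⟨k, l⟩, hkl⟩, hj⟩
    · right
      have hij : (j : ℕ) ≠ i := fun h => hj (congrArg _ (Fin.ext h))
      simp only [ContinuousLinearMap.coe_coe, facetFunctional_inl, facetBound,
        hp ⟨j + 1, by omega⟩ ⟨j, by omega⟩, sub_self, le_refl, true_and, v]
      push_cast
      split_ifs <;> first | omega | norm_num
    · left
      simp only [ContinuousLinearMap.coe_coe, facetFunctional_inr]
      refine sum_headTail_mul_thresholdDegree_lt hn (.inr ⟨rfl, rfl⟩) hkl ?_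
      rw [mem_facetPairs hn] at hkl
      omega
  refine ⟨p + ε • v, ?_, fun j hj => h ⟨j, hj⟩⟩
  simp [facetFunctional_inl, facetBound, hp ⟨i + 1, by omega⟩ ⟨i, by omega⟩, v]

theorem exists_only_tight_inr (hn : 4 ≤ n) (q : facetPairs n) :
    ∃ z, facetFunctional n (.inr q) z = facetBound n (.inr q) ∧
      ∀ j, j ≠ .inr q → facetFunctional n j z < facetBound n j := by
  obtain ⟨⟨k, l⟩, hq⟩ := q
  set ψ := headTail n k l with hψ
  let p : Fin n → ℝ := thresholdDegree (1 / 2) ψ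
  have hψψ : 0 < ∑ i, ψ i * ψ i := by
    have hmem := (mem_facetPairs hn).1 hq
    refine Finset.sum_pos' (fun i _ => mul_self_nonneg _) ?_
    rcases Nat.eq_zero_or_pos k with hk | hk
    · refine ⟨⟨n - 1, by omega⟩, Finset.mem_univ _, ?_⟩
      simp only [hψ, headTail]
      split_ifs <;> first | omega | norm_num
    · refine ⟨⟨0, by omega⟩, Finset.mem_univ _, ?_⟩
      simp only [hψ, headTail]
      split_ifs <;> first | omega | norm_num
  let γ : ℝ := (∑ i, ψ i * (i : ℕ)) / ∑ i, ψ i * ψ i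
  let v : Fin n → ℝ := fun i => γ * ψ i - (i : ℕ)
  have hv : ∑ i, ψ i * v i = 0 := by
    have : ∀ i, ψ i * v i = γ * (ψ i * ψ i) - ψ i * (i : ℕ) := fun i => by ring
    simp only [this, Finset.sum_sub_distrib, ← Finset.mul_sum]
    rw [div_mul_cancel₀ _ hψψ.ne', sub_self]
  obtain ⟨ε, -, h⟩ : ∃ ε : ℝ, 0 < ε ∧
      ∀ j : {j : Fin (n - 1) ⊕ facetPairs n // j ≠ .inr ⟨(k, l), hq⟩},
        facetFunctional n j (p + ε • v) < facetBound n j := by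
    refine exists_pos_forall_lt_add_smul
      (fun j : {j : Fin (n - 1) ⊕ facetPairs n // j ≠ .inr ⟨(k, l), hq⟩} =>
        (facetFunctional n j : (Fin n → ℝ) →ₗ[ℝ] ℝ)) (fun j => facetBound n j.1) p v ?_
    rintro ⟨j | ⟨⟨k', l'⟩, hkl⟩, hj⟩
    · simp only [ContinuousLinearMap.coe_coe, facetFunctional_inl, facetBound]
      by_cases hjj : ψ ⟨j + 1, by omega⟩ = ψ ⟨j, by omega⟩
      · refine .inr ⟨sub_nonpos.2 ?_, ?_⟩
        · exact (thresholdDegree_congr (by norm_num) hjj).le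
        · simp [v, hjj]
      · exact .inl (sub_neg.2 (thresholdDegree_headTail_succ_lt hn hq rfl hjj))
    · left
      simp only [ContinuousLinearMap.coe_coe, facetFunctional_inr]
      refine sum_headTail_mul_thresholdDegree_lt hn (.inl hq) hkl ?_
      rintro ⟨rfl, rfl⟩
      exact hj rfl
  refine ⟨p + ε • v, ?_, fun j hj => h ⟨j, hj⟩⟩
  rw [map_add, map_smul, facetFunctional_inr, facetFunctional_inr]
  simp only [← hψ, hv, smul_zero, add_zero]
  exact sum_headTail_mul_thresholdDegree_self hn hq

end System

/-- for `n ≥ 4`, the polytope `DP(n)` has exactly `n(n-3)/2 + 6`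
facets, where a facet is an exposed proper face of affine dimension `n - 1`. -/
theorem card_facets_DP (n : ℕ) (hn : 4 ≤ n) :
    {F : Set (Fin n → ℝ) | IsExposed ℝ (DP n) F ∧ F ≠ DP n ∧
      Module.finrank ℝ (vectorSpan ℝ F) = n - 1}.ncard = n * (n - 3) / 2 + 6 := by
  have : Nontrivial (Fin (n - 1) ⊕ facetPairs n) :=
    ⟨.inl ⟨0, by omega⟩, .inl ⟨1, by omega⟩, by simp⟩
  have h := ncard_facets_eq_card (facetFunctional n) (facetBound n)
    (by rw [Module.finrank_fin_fun]; omega) fun j => by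
      rcases j with i | q
      exacts [exists_only_tight_inl hn i, exists_only_tight_inr hn q]
  rw [Module.finrank_fin_fun, ← DP_eq_setOf_forall_le hn] at h
  rw [h, Fintype.card_sum, Fintype.card_fin, Fintype.card_coe]
  have hcard := card_facetPairs hn
  obtain ⟨m, rfl⟩ := Nat.exists_eq_add_of_le' hn
  have h1 : (m + 4) * (m + 4 - 3) = m * (m + 4 - 3) + 4 * (m + 1) := by
    rw [show m + 4 - 3 = m + 1 by omega]; ring
  rw [h1]
  rw [Nat.add_sub_cancel] at hcard
  omega
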